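/- Let K be a finite field, let L be the quadratic extension of K (so K ⊆ L with [L : K] = 2), and let d be an integer with gcd(d, |L| − 1) = 1 that is degenerate over K. Then for every a ∈ K, the value W_{L,d}(a) is a nonnegative real number. -/

import Mathlib

/-!
Put `q = |K|` and `d ≡ p ^ j (mod q - 1)`. Substituting `x ↦ b x` for `b ∈ Kˣ` multiplies
`x ^ d` by `b ^ p ^ j`, and since `ψ_K` is invariant under Frobenius this turns `W(a)` into
`∑ x, ψ_K (b ^ p ^ j * F x)`, where `F x = Tr (x ^ d) + Tr (a x) ^ p ^ j ∈ K` and `Tr = Tr_{L/K}`.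
Since every `c ∈ K` is some `b ^ p ^ j`, summing `∑ x, ψ_K (c * F x)` over `c ∈ K` gives
`(q - 1) W(a) = q N - |L|`, where `N` is the number of zeros of `F`.

When `[L : K] = 2`, the kernel of `Tr` is `{x | x ^ q = -x}`. It is stable under `x ↦ x ^ d`
because `(-1) ^ d = -1`, and under multiplication by `a ∈ K`. So `F` vanishes on `ker Tr`, which
has `|L| / q` elements, and therefore `q N ≥ |L|`.
-/

open scoped BigOperators Classical

/-- The canonical additive character of a finite field `K` of characteristic `p`:
`ψ_K(x) = exp(2πi · Tr_{K/F_p}(x) / p)`, where `Tr_{K/F_p}` is the absolute trace. -/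
noncomputable def canonicalAddChar (p : ℕ) [Fact p.Prime] (K : Type) [Field K] [Fintype K]
    [Algebra (ZMod p) K] (x : K) : ℂ :=
  Complex.exp (2 * Real.pi * Complex.I * ((Algebra.trace (ZMod p) K x).val : ℂ) / (p : ℂ))

/-- The Weil sum `W_{K,d}(a) = ∑_{x ∈ K} ψ_K(x^d + a·x)`. -/
noncomputable def weilSum (p : ℕ) [Fact p.Prime] (K : Type) [Field K] [Fintype K]
    [Algebra (ZMod p) K] (d : ℤ) (a : K) : ℂ :=
  ∑ x : K, canonicalAddChar p K (x ^ d + a * x)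

/-- The value set `{W_{K,d}(a) : a ∈ K^×}` of the Weil sum. -/
noncomputable def weilValues (p : ℕ) [Fact p.Prime] (K : Type) [Field K] [Fintype K]
    [Algebra (ZMod p) K] (d : ℤ) : Set ℂ :=
  {w : ℂ | ∃ a : K, a ≠ 0 ∧ weilSum p K d a = w}

/-- `d` is degenerate over a finite field of order `q` and characteristic `p` if
`d ≡ p^j (mod q − 1)` for some nonnegative integer `j`. -/
def IsDegenerate (p : ℕ) (q : ℕ) (d : ℤ) : Prop :=
  ∃ j : ℕ, d ≡ (p : ℤ) ^ j [ZMOD (q : ℤ) - 1]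

lemma zpow_eq_zpow_of_modEq_card_sub_one {G₀ : Type*} [GroupWithZero G₀] [Fintype G₀]
    {c : G₀} (hc : c ≠ 0) {m n : ℤ} (h : m ≡ n [ZMOD (Fintype.card G₀ : ℤ) - 1]) :
    c ^ m = c ^ n := by
  obtain ⟨u, rfl⟩ := hc.isUnit
  have orderOf_dvd : (orderOf u : ℤ) ∣ (Fintype.card G₀ : ℤ) - 1 := by
    have h_dvd := Int.natCast_dvd_natCast.mpr (orderOf_dvd_card (x := u))
    rwa [Fintype.card_units, Nat.cast_sub Fintype.card_pos, Nat.cast_one] at h_dvd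
  rw [← Units.val_zpow_eq_zpow_val, ← Units.val_zpow_eq_zpow_val,
    zpow_eq_zpow_iff_modEq.mpr (h.of_dvd orderOf_dvd)]

lemma neg_one_zpow_eq_neg_one_of_modEq {K : Type*} [Field K] [Fintype K] (p : ℕ) [Fact p.Prime]
    [CharP K p] {d : ℤ} {j : ℕ} (hj : d ≡ (p : ℤ) ^ j [ZMOD (Fintype.card K : ℤ) - 1]) :
    (-1 : K) ^ d = -1 := by
  rw [zpow_eq_zpow_of_modEq_card_sub_one (neg_ne_zero.mpr one_ne_zero) hj, ← Nat.cast_pow,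
    zpow_natCast, neg_one_pow_char_pow]

lemma card_sub_one_mul_eq_of_sum_addChar_mul_eq {A X R : Type*} [CommRing A] [Fintype A]
    [Fintype X] [CommRing R] [IsDomain R] {ψ : AddChar A R} (hψ : ψ.IsPrimitive) (f : X → A)
    {w : R} (hw : ∀ c : A, c ≠ 0 → ∑ x, ψ (c * f x) = w) :
    ((Fintype.card A : R) - 1) * w =
      Fintype.card A * (Finset.univ.filter fun x ↦ f x = 0).card - Fintype.card X := by
  have sum_by_points : ∑ c, ∑ x, ψ (c * f x) =
      Fintype.card A * (Finset.univ.filter fun x ↦ f x = 0).card := by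
    rw [Finset.sum_comm]
    simp only [AddChar.sum_mulShift _ hψ, Nat.cast_ite, Nat.cast_zero]
    rw [← Finset.sum_filter, Finset.sum_const, nsmul_eq_mul, mul_comm]
  have sum_by_scalars : ∑ c, ∑ x, ψ (c * f x) =
      Fintype.card X + ((Fintype.card A : R) - 1) * w := by
    rw [← Finset.add_sum_erase _ _ (Finset.mem_univ (0 : A)),
      Finset.sum_congr rfl fun c hc ↦ hw c (Finset.ne_of_mem_erase hc)]
    simp [Nat.cast_sub Fintype.card_pos]
  rw [← sum_by_points, sum_by_scalars, add_sub_cancel_left]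

section Trace

variable {K L : Type*} [Field K] [Field L] [Algebra K L]

variable (K) in
lemma trace_pow_card_pow [Fintype K] [Algebra.IsAlgebraic K L] (n : ℕ) (x : L) :
    Algebra.trace K L (x ^ Fintype.card K ^ n) = Algebra.trace K L x := by
  rw [← Algebra.trace_eq_of_algEquiv (FiniteField.frobeniusAlgEquivOfAlgebraic K L ^ n) x,
    AlgEquiv.coe_pow, FiniteField.coe_frobeniusAlgEquivOfAlgebraic_iterate]

variable (K L) in
lemma card_mul_card_trace_eq_zero [Fintype K] [Fintype L] :
    Fintype.card K * (Finset.univ.filter fun x : L ↦ Algebra.trace K L x = 0).card =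
      Fintype.card L := by
  have card_range := Nat.card_congr
    ((Algebra.trace K L).quotKerEquivOfSurjective (Algebra.trace_surjective K L)).toEquiv
  have card_ker : Nat.card (LinearMap.ker (Algebra.trace K L)) =
      (Finset.univ.filter fun x : L ↦ Algebra.trace K L x = 0).card := by
    rw [← Fintype.card_subtype, ← Nat.card_eq_fintype_card]
    rfl
  rw [← card_ker, ← Nat.card_eq_fintype_card, ← card_range, ← Nat.card_eq_fintype_card,
    mul_comm, ← Submodule.card_eq_card_quotient_mul_card]

lemma trace_eq_zero_iff_pow_card_eq_neg [Finite L] (h2 : Module.finrank K L = 2) (x : L) :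
    Algebra.trace K L x = 0 ↔ x ^ Nat.card K = -x := by
  rw [← map_eq_zero (algebraMap K L), FiniteField.algebraMap_trace_eq_sum_pow, h2,
    Finset.sum_range_succ, Finset.sum_range_one, pow_zero, pow_one, pow_one,
    add_eq_zero_iff_neg_eq, eq_comm]

lemma trace_zpow_eq_zero [Finite L] (h2 : Module.finrank K L = 2) {d : ℤ}
    (hd : (-1 : L) ^ d = -1) {x : L} (hx : Algebra.trace K L x = 0) :
    Algebra.trace K L (x ^ d) = 0 := by
  rw [trace_eq_zero_iff_pow_card_eq_neg h2] at hx ⊢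
  calc (x ^ d) ^ Nat.card K
      = (x ^ Nat.card K) ^ d := by rw [← zpow_natCast, zpow_comm, zpow_natCast]
    _ = (-1) ^ d * x ^ d := by rw [hx, neg_eq_neg_one_mul, mul_zpow]
    _ = -x ^ d := by rw [hd, neg_one_mul]

end Trace

/-- The canonical additive character `ψ_F` of a finite field `F` of characteristic `p`, as an
`AddChar`; unlike `canonicalAddChar`, it is available for `F` in any universe. -/
noncomputable def traceAddChar (p : ℕ) [Fact p.Prime] (F : Type*) [Field F]
    [Algebra (ZMod p) F] : AddChar F ℂ :=
  ZMod.stdAddChar.compAddMonoidHom (Algebra.trace (ZMod p) F).toAddMonoidHom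

section TraceAddChar

variable (p : ℕ) [Fact p.Prime]

lemma traceAddChar_apply {F : Type*} [Field F] [Algebra (ZMod p) F] (x : F) :
    traceAddChar p F x = ZMod.stdAddChar (Algebra.trace (ZMod p) F x) :=
  rfl

lemma canonicalAddChar_eq_traceAddChar {F : Type} [Field F] [Fintype F] [Algebra (ZMod p) F]
    (x : F) : canonicalAddChar p F x = traceAddChar p F x := by
  have h := ZMod.stdAddChar_coe (N := p) ((Algebra.trace (ZMod p) F x).val : ℤ)
  rw [Int.cast_natCast, ZMod.natCast_zmod_val, Int.cast_natCast] at h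
  rw [canonicalAddChar, traceAddChar_apply, h]

lemma traceAddChar_pow_char_pow {F : Type*} [Field F] [Finite F] [Algebra (ZMod p) F]
    (n : ℕ) (x : F) : traceAddChar p F (x ^ p ^ n) = traceAddChar p F x := by
  have h := trace_pow_card_pow (ZMod p) n x
  rw [ZMod.card] at h
  rw [traceAddChar_apply, h, traceAddChar_apply]

lemma traceAddChar_trace (K : Type*) {L : Type*} [Field K] [Field L] [Finite L] [Algebra K L]
    [Algebra (ZMod p) K] [Algebra (ZMod p) L] [IsScalarTower (ZMod p) K L] (x : L) :
    traceAddChar p K (Algebra.trace K L x) = traceAddChar p L x := by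
  have : Finite K := Finite.of_injective _ (algebraMap K L).injective
  rw [traceAddChar_apply, Algebra.trace_trace, traceAddChar_apply]

lemma isPrimitive_traceAddChar (F : Type*) [Field F] [Finite F] [Algebra (ZMod p) F] :
    (traceAddChar p F).IsPrimitive := by
  refine AddChar.IsPrimitive.of_ne_one (AddChar.ne_one_iff.mpr ?_)
  obtain ⟨x, hx⟩ := Algebra.trace_surjective (ZMod p) F 1
  refine ⟨x, fun h ↦ one_ne_zero (α := ZMod p) (ZMod.injective_stdAddChar ?_)⟩
  rw [← hx, ← traceAddChar_apply, h, AddChar.map_zero_eq_one]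

end TraceAddChar

/-- The function `x ↦ Tr_{L/K}(x ^ d) + Tr_{L/K}(a x) ^ (p ^ j)`, whose zeros determine
`W_{L,d}(a)` when `d ≡ p ^ j (mod |K| - 1)`. The power `p ^ j` on the second term does not affect
`ψ_K`, but makes the function homogeneous under scaling by `Kˣ`. -/
noncomputable def twistedTrace (p : ℕ) (K : Type*) {L : Type*} [Field K] [Field L] [Algebra K L]
    (d : ℤ) (j : ℕ) (a x : L) : K :=
  Algebra.trace K L (x ^ d) + Algebra.trace K L (a * x) ^ p ^ j

section TwistedTrace

variable {p : ℕ} {K L : Type*} [Field K] [Fintype K] [Field L] [Algebra K L] {d : ℤ} {j : ℕ}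

lemma twistedTrace_algebraMap_mul (hj : d ≡ (p : ℤ) ^ j [ZMOD (Fintype.card K : ℤ) - 1])
    {b : K} (hb : b ≠ 0) (a x : L) :
    twistedTrace p K d j a (algebraMap K L b * x) = b ^ p ^ j * twistedTrace p K d j a x := by
  have zpow_b : b ^ d = b ^ p ^ j := by
    rw [zpow_eq_zpow_of_modEq_card_sub_one hb hj, ← Nat.cast_pow, zpow_natCast]
  have trace_zpow : Algebra.trace K L ((algebraMap K L b * x) ^ d) =
      b ^ p ^ j * Algebra.trace K L (x ^ d) := by
    rw [mul_zpow, ← map_zpow₀, zpow_b, ← Algebra.smul_def, map_smul, smul_eq_mul]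
  have trace_mul : Algebra.trace K L (a * (algebraMap K L b * x)) =
      b * Algebra.trace K L (a * x) := by
    rw [mul_left_comm, ← Algebra.smul_def, map_smul, smul_eq_mul]
  rw [twistedTrace, twistedTrace, trace_zpow, trace_mul, mul_pow, mul_add]

lemma twistedTrace_algebraMap_eq_zero [Fact p.Prime] [CharP K p] [Finite L]
    (h2 : Module.finrank K L = 2) (hj : d ≡ (p : ℤ) ^ j [ZMOD (Fintype.card K : ℤ) - 1])
    (a : K) {x : L} (hx : Algebra.trace K L x = 0) :
    twistedTrace p K d j (algebraMap K L a) x = 0 := by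
  have neg_one_zpow : (-1 : L) ^ d = -1 := by
    simpa using congrArg (algebraMap K L) (neg_one_zpow_eq_neg_one_of_modEq p hj)
  rw [twistedTrace, trace_zpow_eq_zero h2 neg_one_zpow hx, ← Algebra.smul_def, map_smul, hx,
    smul_zero, zero_pow (pow_ne_zero j (Fact.out : p.Prime).ne_zero), add_zero]

lemma card_le_card_mul_card_twistedTrace_eq_zero [Fact p.Prime] [CharP K p] [Fintype L]
    (h2 : Module.finrank K L = 2) (hj : d ≡ (p : ℤ) ^ j [ZMOD (Fintype.card K : ℤ) - 1]) (a : K) :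
    Fintype.card L ≤ Fintype.card K *
      (Finset.univ.filter fun x : L ↦ twistedTrace p K d j (algebraMap K L a) x = 0).card := by
  rw [← card_mul_card_trace_eq_zero K L]
  exact Nat.mul_le_mul_left _ (Finset.card_le_card (Finset.monotone_filter_right _
    fun _ _ ↦ twistedTrace_algebraMap_eq_zero h2 hj a))

end TwistedTrace

section WeilSum

variable {p : ℕ} [Fact p.Prime] {K : Type*} {L : Type} [Field K] [Field L] [Fintype L]
  [Algebra (ZMod p) L] [Algebra K L] {d : ℤ}

lemma weilSum_eq_sum_traceAddChar_twistedTrace [Algebra (ZMod p) K] [IsScalarTower (ZMod p) K L]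
    (j : ℕ) (a : L) :
    weilSum p L d a = ∑ x : L, traceAddChar p K (twistedTrace p K d j a x) := by
  have : Finite K := Finite.of_injective _ (algebraMap K L).injective
  refine Finset.sum_congr rfl fun x _ ↦ ?_
  rw [canonicalAddChar_eq_traceAddChar, ← traceAddChar_trace p K, twistedTrace, map_add,
    AddChar.map_add_eq_mul, AddChar.map_add_eq_mul, traceAddChar_pow_char_pow]

lemma sum_traceAddChar_mul_twistedTrace [Fintype K] [Algebra (ZMod p) K]
    [IsScalarTower (ZMod p) K L] {j : ℕ}
    (hj : d ≡ (p : ℤ) ^ j [ZMOD (Fintype.card K : ℤ) - 1]) (a : L) {c : K} (hc : c ≠ 0) :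
    ∑ x : L, traceAddChar p K (c * twistedTrace p K d j a x) = weilSum p L d a := by
  have : CharP K p := charP_of_injective_algebraMap (algebraMap (ZMod p) K).injective p
  obtain ⟨b, rfl⟩ : ∃ b : K, b ^ p ^ j = c := (iterateFrobeniusEquiv K p j).surjective c
  have hb : b ≠ 0 := ne_zero_pow (pow_ne_zero j (Fact.out : p.Prime).ne_zero) hc
  have hb_map : algebraMap K L b ≠ 0 := by rwa [map_ne_zero]
  simp only [← twistedTrace_algebraMap_mul hj hb]
  rw [weilSum_eq_sum_traceAddChar_twistedTrace (K := K) j]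
  exact Equiv.sum_comp (Equiv.mulLeft₀ _ hb_map) fun x ↦ traceAddChar p K (twistedTrace p K d j a x)

lemma card_sub_one_mul_weilSum [Fintype K] [CharP K p] {j : ℕ}
    (hj : d ≡ (p : ℤ) ^ j [ZMOD (Fintype.card K : ℤ) - 1]) (a : L) :
    ((Fintype.card K : ℂ) - 1) * weilSum p L d a =
      Fintype.card K * (Finset.univ.filter fun x : L ↦ twistedTrace p K d j a x = 0).card -
        Fintype.card L := by
  let _ : Algebra (ZMod p) K := ZMod.algebra K p
  have : IsScalarTower (ZMod p) K L := .of_algebraMap_eq' (Subsingleton.elim _ _)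
  exact card_sub_one_mul_eq_of_sum_addChar_mul_eq (isPrimitive_traceAddChar p K) _
    fun _ ↦ sum_traceAddChar_mul_twistedTrace hj a

end WeilSum

theorem stmt19_general (p : ℕ) [Fact p.Prime] (K : Type*) (L : Type) [Field K] [Fintype K]
    [Field L] [Fintype L] [Algebra (ZMod p) L] [Algebra K L]
    (h2 : Module.finrank K L = 2) (d : ℤ) (hdegK : IsDegenerate p (Fintype.card K) d) (a : K) :
    ∃ r : ℝ, 0 ≤ r ∧ weilSum p L d (algebraMap K L a) = (r : ℂ) := by
  have : CharP L p := charP_of_injective_algebraMap (algebraMap (ZMod p) L).injective p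
  have : CharP K p := (algebraMap K L).charP (algebraMap K L).injective p
  obtain ⟨j, hj⟩ := hdegK
  have formula := card_sub_one_mul_weilSum hj (algebraMap K L a)
  have bound := card_le_card_mul_card_twistedTrace_eq_zero h2 hj a
  set N := (Finset.univ.filter fun x : L ↦ twistedTrace p K d j (algebraMap K L a) x = 0).card
  have card_gt_one : (1 : ℝ) < Fintype.card K := by exact_mod_cast Fintype.one_lt_card
  have card_sub_one_ne_zero : (Fintype.card K : ℂ) - 1 ≠ 0 := by
    exact_mod_cast (sub_pos.mpr card_gt_one).ne'
  refine ⟨(Fintype.card K * N - Fintype.card L) / (Fintype.card K - 1),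
    div_nonneg (sub_nonneg.mpr (by exact_mod_cast bound)) (sub_pos.mpr card_gt_one).le, ?_⟩
  push_cast
  rw [eq_div_iff card_sub_one_ne_zero, mul_comm, formula]

theorem stmt19 (p : ℕ) [Fact p.Prime] (K L : Type) [Field K] [Fintype K]
    [Field L] [Fintype L] [CharP L p] [Algebra (ZMod p) L] [Algebra K L]
    (h2 : Module.finrank K L = 2)
    (d : ℤ) (hd : Int.gcd d ((Fintype.card L : ℤ) - 1) = 1)
    (hdegK : IsDegenerate p (Fintype.card K) d) :
    ∀ a : K, ∃ r : ℝ, 0 ≤ r ∧ weilSum p L d (algebraMap K L a) = (r : ℂ) :=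
  stmt19_general p K L h2 d hdegK
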